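/- Let K be a field and q ∈ K with q ≠ 0 and q² ≠ 1. Let A be an associative K-algebra, let e, E, f, F ∈ A, and let H ∈ A be invertible, satisfying E*F − F*E = (H − H⁻¹)/(q − q⁻¹), e*f = f*e, e*F = F*e, E*f = f*E, H*e = q⁻¹·e*H, and H*f = q·f*H. Then [e, E]_q * [f, F]_{q⁻¹} − [f, F]_{q⁻¹} * [e, E]_q = (q − q⁻¹)·f*e*H⁻¹. -/

import Mathlib

/-!
Commutators act as derivations on `a`-commutators, so a commutator with an element that commutes
with the first entry passes to the second entry. Applied twice, this gives
`⁅[e, E]_q, [f, F]_{q⁻¹}⁆ = [f, [e, ⁅E, F⁆]_q]_{q⁻¹}`. On elements commuting up to a scalar, an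
`a`-commutator is a multiple of the product: `[e, H]_q` vanishes, and only the `H⁻¹` part of
`⁅E, F⁆` survives.
-/

/-- The `a`-commutator `[x, y]_a = x*y - a • (y*x)` in a `K`-algebra. -/
def qComm {K : Type*} [Field K] {A : Type*} [Ring A] [Algebra K A]
    (a : K) (x y : A) : A := x * y - a • (y * x)

lemma units_inv_mul_eq_inv_smul_mul {G₀ M : Type*} [GroupWithZero G₀] [Monoid M] [MulAction G₀ M]
    [IsScalarTower G₀ M M] [SMulCommClass G₀ M M] {c : G₀} (hc : c ≠ 0) {u : Mˣ} {x : M}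
    (h : (u : M) * x = c • (x * (u : M))) :
    ((u⁻¹ : Mˣ) : M) * x = c⁻¹ • (x * ((u⁻¹ : Mˣ) : M)) := by
  have hu : SemiconjBy (u : M) x (c • x) := by rw [SemiconjBy, h, smul_mul_assoc]
  rw [← hu.units_inv_symm_left.eq, mul_smul_comm, inv_smul_smul₀ hc]

section qComm

variable {K : Type*} [Field K] {A : Type*} [Ring A] [Algebra K A]

@[simp]
lemma qComm_zero_left (a : K) (y : A) : qComm a 0 y = 0 := by
  simp [qComm]

lemma qComm_sub_right (a : K) (x y z : A) : qComm a x (y - z) = qComm a x y - qComm a x z := by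
  simp only [qComm, mul_sub, sub_mul, smul_sub]
  abel

lemma qComm_smul_right (a c : K) (x y : A) : qComm a x (c • y) = c • qComm a x y := by
  simp only [qComm, mul_smul_comm, smul_mul_assoc, smul_sub, smul_comm a c]

lemma qComm_eq_smul_mul {a c : K} {x y : A} (h : y * x = c • (x * y)) :
    qComm a x y = (1 - a * c) • (x * y) := by
  rw [qComm, h, smul_smul, sub_smul, one_smul]

lemma lie_qComm (a : K) (x y z : A) :
    ⁅x, qComm a y z⁆ = qComm a ⁅x, y⁆ z + qComm a y ⁅x, z⁆ := by
  simp only [qComm, Ring.lie_def, mul_sub, sub_mul, smul_sub, mul_smul_comm, smul_mul_assoc,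
    mul_assoc]
  abel

lemma qComm_lie (a : K) (x y z : A) :
    ⁅qComm a x y, z⁆ = qComm a ⁅x, z⁆ y + qComm a x ⁅y, z⁆ := by
  simp only [qComm, Ring.lie_def, mul_sub, sub_mul, smul_sub, mul_smul_comm, smul_mul_assoc,
    mul_assoc]
  abel

lemma commute_qComm_left (a : K) {x y z : A} (hx : Commute x z) (hy : Commute y z) :
    Commute (qComm a x y) z :=
  (hx.mul_left hy).sub_left ((hy.mul_left hx).smul_left a)

lemma lie_qComm_qComm_of_commute (a b : K) {x y z w : A} (hxz : Commute x z) (hxw : Commute x w)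
    (hyz : Commute y z) :
    ⁅qComm a x y, qComm b z w⁆ = qComm b z (qComm a x ⁅y, w⁆) := by
  rw [lie_qComm, (commute_qComm_left a hxz hyz).lie_eq, qComm_zero_left, zero_add, qComm_lie,
    hxw.lie_eq, qComm_zero_left, zero_add]

lemma qComm_units_sub_inv {q : K} (hq : q ≠ 0) {x : A} {u : Aˣ}
    (h : (u : A) * x = q⁻¹ • (x * (u : A))) :
    qComm q x ((u : A) - ((u⁻¹ : Aˣ) : A)) = (q ^ 2 - 1) • (x * ((u⁻¹ : Aˣ) : A)) := by
  have h_inv : ((u⁻¹ : Aˣ) : A) * x = q • (x * ((u⁻¹ : Aˣ) : A)) := by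
    simpa only [inv_inv] using units_inv_mul_eq_inv_smul_mul (inv_ne_zero hq) h
  rw [qComm_sub_right, qComm_eq_smul_mul h, qComm_eq_smul_mul h_inv, mul_inv_cancel₀ hq, sub_self,
    zero_smul, zero_sub, ← neg_smul, neg_sub, sq]

end qComm

/-- Abstract form of `[e_{μ+γ}, f_{γ+ν}] = (q - q⁻¹) f_ν e_μ q^{-h_γ}`. -/
theorem composite_cross_commutator {K : Type*} [Field K] (q : K) (hq : q ≠ 0)
    (hq2 : q ^ 2 ≠ 1) {A : Type*} [Ring A] [Algebra K A]
    (e E f F : A) (H : Aˣ)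
    (hEF : E * F - F * E = (q - q⁻¹)⁻¹ • ((H : A) - ((H⁻¹ : Aˣ) : A)))
    (hef : e * f = f * e) (heF : e * F = F * e) (hEf : E * f = f * E)
    (hHe : (H : A) * e = q⁻¹ • (e * (H : A)))
    (hHf : (H : A) * f = q • (f * (H : A))) :
    qComm q e E * qComm q⁻¹ f F - qComm q⁻¹ f F * qComm q e E =
      (q - q⁻¹) • (f * e * ((H⁻¹ : Aˣ) : A)) := by
  have h_scalar : (q - q⁻¹)⁻¹ * (q ^ 2 - 1) = q := by
    have h_sq : q ^ 2 - 1 ≠ 0 := sub_ne_zero.2 hq2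
    field_simp
  have h_inner : qComm q e ⁅E, F⁆ = q • (e * ((H⁻¹ : Aˣ) : A)) := by
    rw [Ring.lie_def, hEF, qComm_smul_right, qComm_units_sub_inv hq hHe, smul_smul, h_scalar]
  have h_outer : e * ((H⁻¹ : Aˣ) : A) * f = q⁻¹ • (f * (e * ((H⁻¹ : Aˣ) : A))) := by
    rw [mul_assoc, units_inv_mul_eq_inv_smul_mul hq hHf, mul_smul_comm, ← mul_assoc, hef, mul_assoc]
  calc qComm q e E * qComm q⁻¹ f F - qComm q⁻¹ f F * qComm q e E
      = qComm q⁻¹ f (qComm q e ⁅E, F⁆) := lie_qComm_qComm_of_commute q q⁻¹ hef heF hEf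
    _ = q • (1 - q⁻¹ * q⁻¹) • (f * (e * ((H⁻¹ : Aˣ) : A))) := by
      rw [h_inner, qComm_smul_right, qComm_eq_smul_mul h_outer]
    _ = (q - q⁻¹) • (f * e * ((H⁻¹ : Aˣ) : A)) := by
      rw [smul_smul, mul_sub, mul_one, mul_inv_cancel_left₀ hq, mul_assoc]
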